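/- For every x > 0 one has 0 < f(x) < 1; moreover f(x) → 0 as x → 0⁺ and f(x) → 1 as x → ∞. -/

import Mathlib

/-!
Write `h t = √(t⁴+1) - t²`. Differentiating `L t = t * h t / 2` gives `L' = (3/2) * h - 1/√(t⁴+1)`,
and `L` vanishes at infinity, so the definition of `f` collapses to the single integral
`f x = 2 * x * ∫ t in (x, ∞), h t` (`f_eq`).

Since `h t * (√(t⁴+1) + t²) = 1`, one has `0 < h t < 1 / (2t²)`, and `∫ t in (x, ∞), t⁻² = 1/x`
turns this into `0 < f x < 1`. The limit at `0` follows because `h` is integrable on `(0, ∞)`.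
The limit at infinity follows by squeezing, using `h t ≥ c / (2t²)` for `t > x` with
`c = 4x⁴/(4x⁴+1)`.
-/

open Real MeasureTheory Filter Topology

/-- The metric function `f` of the Einstein-Born-Infeld black hole:
`f(x) = (2/3)*(x^4 - x^2*sqrt(x^4+1)) + (4/3)*x*(integral of 1/sqrt(t^4+1) over (x,oo))`. -/
noncomputable def f (x : ℝ) : ℝ :=
  (2 / 3) * (x ^ 4 - x ^ 2 * Real.sqrt (x ^ 4 + 1))
    + (4 / 3) * x * ∫ t in Set.Ioi x, 1 / Real.sqrt (t ^ 4 + 1)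

/-- The integrand `√(t⁴+1) - t²` of the single-integral form of `f`. -/
noncomputable def gap (t : ℝ) : ℝ := √(t ^ 4 + 1) - t ^ 2

lemma continuous_gap : Continuous gap := by
  unfold gap; fun_prop

lemma gap_pos (t : ℝ) : 0 < gap t := by
  have : t ^ 2 < √(t ^ 4 + 1) := Real.lt_sqrt_of_sq_lt (by nlinarith)
  unfold gap; linarith

lemma gap_lt {t : ℝ} (ht : 0 < t) : gap t < 1 / 2 * t ^ (-2 : ℝ) := by
  have e : t ^ (-2 : ℝ) = (t ^ 2)⁻¹ := by rw [Real.rpow_neg ht.le]; norm_cast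
  have : √(t ^ 4 + 1) < t ^ 2 + 1 / 2 * (t ^ 2)⁻¹ := by
    rw [Real.sqrt_lt' (by positivity)]
    have h1 : t ^ 2 * (t ^ 2)⁻¹ = 1 := mul_inv_cancel₀ (by positivity)
    have h2 : 0 < (t ^ 2)⁻¹ := by positivity
    nlinarith
  rw [e]; unfold gap; linarith

lemma le_gap {x t : ℝ} (hx : 0 < x) (ht : x < t) :
    4 * x ^ 4 / (4 * x ^ 4 + 1) * (1 / 2 * t ^ (-2 : ℝ)) ≤ gap t := by
  have ht0 : 0 < t := hx.trans ht
  have e : t ^ (-2 : ℝ) = (t ^ 2)⁻¹ := by rw [Real.rpow_neg ht0.le]; norm_cast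
  have hlt := gap_lt ht0
  have hp := gap_pos t
  have hs : √(t ^ 4 + 1) ^ 2 = t ^ 4 + 1 := Real.sq_sqrt (by positivity)
  have hprod : gap t * (gap t + 2 * t ^ 2) = 1 := by unfold gap; nlinarith
  have h4 : x ^ 4 ≤ t ^ 4 := by gcongr
  rw [e] at hlt ⊢
  have h1 : t ^ 2 * (t ^ 2)⁻¹ = 1 := mul_inv_cancel₀ (by positivity)
  have h2 : gap t * t ^ 2 < 1 / 2 := by nlinarith [pow_pos ht0 2]
  -- With `g = gap t * t²`, the identity `hprod` reads `g² + 2 * g * t⁴ = t⁴`.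
  have h3 : (gap t * t ^ 2) ^ 2 + 2 * (gap t * t ^ 2) * t ^ 4 = t ^ 4 := by
    linear_combination t ^ 4 * hprod
  have h5 : 0 < gap t * t ^ 2 := by positivity
  have h6 : 4 * t ^ 4 ≤ 2 * (gap t * t ^ 2) * (4 * t ^ 4 + 1) := by nlinarith
  have h7 : 4 * x ^ 4 / (4 * x ^ 4 + 1) ≤ 2 * (gap t * t ^ 2) := by
    rw [div_le_iff₀ (by positivity)]
    nlinarith
  calc _ ≤ 2 * (gap t * t ^ 2) * (1 / 2 * (t ^ 2)⁻¹) := by gcongr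
    _ = gap t * (t ^ 2 * (t ^ 2)⁻¹) := by ring
    _ = gap t := by rw [h1, mul_one]

lemma integrableOn_half_rpow {x : ℝ} (hx : 0 < x) :
    IntegrableOn (fun t : ℝ => 1 / 2 * t ^ (-2 : ℝ)) (Set.Ioi x) :=
  (integrableOn_Ioi_rpow_of_lt (by norm_num) hx).const_mul _

lemma integral_half_rpow {x : ℝ} (hx : 0 < x) :
    ∫ t in Set.Ioi x, 1 / 2 * t ^ (-2 : ℝ) = 1 / (2 * x) := by
  rw [integral_const_mul, integral_Ioi_rpow_of_lt (by norm_num) hx]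
  norm_num [Real.rpow_neg_one]
  ring

lemma integrableOn_gap {x : ℝ} (hx : 0 < x) : IntegrableOn gap (Set.Ioi x) := by
  refine (integrableOn_half_rpow hx).mono' continuous_gap.aestronglyMeasurable ?_
  filter_upwards [ae_restrict_mem measurableSet_Ioi] with t ht
  rw [Real.norm_of_nonneg (gap_pos t).le]
  exact (gap_lt (hx.trans ht)).le

lemma integrableOn_gap_zero : IntegrableOn gap (Set.Ioi 0) := by
  rw [← Set.Ioc_union_Ioi_eq_Ioi (zero_le_one (α := ℝ))]
  exact (continuous_gap.integrableOn_Ioc).union (integrableOn_gap one_pos)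

lemma integrableOn_inv_sqrt {x : ℝ} (hx : 0 < x) :
    IntegrableOn (fun t : ℝ => 1 / √(t ^ 4 + 1)) (Set.Ioi x) := by
  refine (integrableOn_Ioi_rpow_of_lt (by norm_num : (-2 : ℝ) < -1) hx).mono'
    (by fun_prop : Measurable fun t : ℝ => 1 / √(t ^ 4 + 1)).aestronglyMeasurable ?_
  filter_upwards [ae_restrict_mem measurableSet_Ioi] with t ht
  have ht0 : 0 < t := hx.trans ht
  have e : t ^ (-2 : ℝ) = (t ^ 2)⁻¹ := by rw [Real.rpow_neg ht0.le]; norm_cast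
  have := gap_pos t
  unfold gap at this
  rw [Real.norm_of_nonneg (by positivity), e, one_div]
  gcongr
  linarith

lemma hasDerivAt_mul_gap (t : ℝ) :
    HasDerivAt (fun t => t * gap t / 2) (3 / 2 * gap t - 1 / √(t ^ 4 + 1)) t := by
  have hpos : 0 < t ^ 4 + 1 := by positivity
  have h1 : HasDerivAt (fun t : ℝ => t ^ 4 + 1) (4 * t ^ 3) t := by
    simpa using (hasDerivAt_pow 4 t).add_const 1
  have h2 : HasDerivAt (fun t : ℝ => t ^ 2) (2 * t) t := by
    simpa using hasDerivAt_pow 2 t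
  have h3 : HasDerivAt gap (4 * t ^ 3 / (2 * √(t ^ 4 + 1)) - 2 * t) t :=
    (h1.sqrt hpos.ne').sub h2
  refine (((hasDerivAt_id t).mul h3).div_const 2).congr_deriv ?_
  have hs : √(t ^ 4 + 1) ^ 2 = t ^ 4 + 1 := Real.sq_sqrt hpos.le
  have hs0 : √(t ^ 4 + 1) ≠ 0 := (Real.sqrt_pos.2 hpos).ne'
  simp only [gap, id]
  field_simp
  linear_combination (-4) * hs

lemma tendsto_mul_gap : Tendsto (fun t => t * gap t / 2) atTop (𝓝 0) := by
  refine tendsto_of_tendsto_of_tendsto_of_le_of_le' tendsto_const_nhds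
    tendsto_inv_atTop_zero ?_ ?_
  · filter_upwards [eventually_gt_atTop 0] with t ht
    have := gap_pos t
    positivity
  · filter_upwards [eventually_gt_atTop 0] with t ht
    have e : t ^ (-2 : ℝ) = t⁻¹ * t⁻¹ := by
      rw [Real.rpow_neg ht.le, ← mul_inv, ← sq]; norm_cast
    have h := gap_lt ht
    have h1 : t * t⁻¹ = 1 := mul_inv_cancel₀ ht.ne'
    have h2 : 0 < t⁻¹ := by positivity
    rw [e] at h
    have h3 : t * gap t < t * (1 / 2 * (t⁻¹ * t⁻¹)) := by gcongr
    have h4 : t * (1 / 2 * (t⁻¹ * t⁻¹)) = 1 / 2 * t⁻¹ := by linear_combination (1 / 2 * t⁻¹) * h1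
    linarith

lemma f_eq {x : ℝ} (hx : 0 < x) : f x = 2 * x * ∫ t in Set.Ioi x, gap t := by
  have hg := (integrableOn_gap hx).const_mul (3 / 2)
  have hi := integrableOn_inv_sqrt hx
  have key := integral_Ioi_of_hasDerivAt_of_tendsto' (a := x)
    (fun t _ => hasDerivAt_mul_gap t) (hg.sub hi) tendsto_mul_gap
  rw [integral_sub hg hi, integral_const_mul] at key
  have hx' : gap x = √(x ^ 4 + 1) - x ^ 2 := rfl
  rw [hx'] at key
  unfold f
  linear_combination (-(4 / 3) * x) * key

lemma integral_Ioi_pos {g : ℝ → ℝ} {x : ℝ} (hg : IntegrableOn g (Set.Ioi x))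
    (hpos : ∀ t ∈ Set.Ioi x, 0 < g t) : 0 < ∫ t in Set.Ioi x, g t := by
  rw [setIntegral_pos_iff_support_of_nonneg_ae _ hg]
  · have hsub : Set.Ioi x ⊆ Function.support g := fun t ht => (hpos t ht).ne'
    rw [Set.inter_eq_right.2 hsub]
    simp
  · filter_upwards [ae_restrict_mem measurableSet_Ioi] with t ht
    exact (hpos t ht).le

lemma f_pos {x : ℝ} (hx : 0 < x) : 0 < f x := by
  have := integral_Ioi_pos (integrableOn_gap hx) fun t _ => gap_pos t
  rw [f_eq hx]; positivity

lemma f_lt_one {x : ℝ} (hx : 0 < x) : f x < 1 := by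
  have h := integral_Ioi_pos ((integrableOn_half_rpow hx).sub (integrableOn_gap hx))
    fun t ht => sub_pos.2 (gap_lt (hx.trans ht))
  simp only [Pi.sub_apply] at h
  rw [integral_sub (integrableOn_half_rpow hx) (integrableOn_gap hx), integral_half_rpow hx,
    sub_pos, lt_div_iff₀ (by positivity)] at h
  rw [f_eq hx]; linarith

lemma le_f {x : ℝ} (hx : 0 < x) : 4 * x ^ 4 / (4 * x ^ 4 + 1) ≤ f x := by
  have h := setIntegral_mono_on ((integrableOn_half_rpow hx).const_mul _) (integrableOn_gap hx)
    measurableSet_Ioi fun t ht => le_gap hx ht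
  rw [integral_const_mul, integral_half_rpow hx] at h
  rw [f_eq hx]
  calc _ = 2 * x * (4 * x ^ 4 / (4 * x ^ 4 + 1) * (1 / (2 * x))) := by field_simp
    _ ≤ _ := by gcongr

lemma tendsto_f_zero : Tendsto f (𝓝[>] (0 : ℝ)) (𝓝 0) := by
  have hlim : Tendsto (fun x : ℝ => 2 * x * ∫ t in Set.Ioi 0, gap t) (𝓝[>] 0) (𝓝 0) := by
    have : Continuous fun x : ℝ => 2 * x * ∫ t in Set.Ioi 0, gap t := by fun_prop
    simpa using (this.tendsto 0).mono_left nhdsWithin_le_nhds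
  refine tendsto_of_tendsto_of_tendsto_of_le_of_le' tendsto_const_nhds hlim ?_ ?_
  · filter_upwards [self_mem_nhdsWithin] with x hx using (f_pos hx).le
  · filter_upwards [self_mem_nhdsWithin] with x hx
    have hx0 : 0 < x := hx
    rw [f_eq hx0]
    refine mul_le_mul_of_nonneg_left ?_ (by positivity)
    exact setIntegral_mono_set integrableOn_gap_zero (Eventually.of_forall fun t => (gap_pos t).le)
      (Set.Ioi_subset_Ioi hx0.le).eventuallyLE

lemma tendsto_f_atTop : Tendsto f atTop (𝓝 1) := by
  have hlim : Tendsto (fun x : ℝ => 4 * x ^ 4 / (4 * x ^ 4 + 1)) atTop (𝓝 1) := by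
    have h4 : Tendsto (fun x : ℝ => 4 * x ^ 4 + 1) atTop atTop :=
      tendsto_atTop_add_const_right _ _
        ((tendsto_pow_atTop (by norm_num)).const_mul_atTop (by norm_num))
    have := (tendsto_inv_atTop_zero.comp h4).const_sub 1
    rw [sub_zero] at this
    refine this.congr fun x => ?_
    have : 4 * x ^ 4 + 1 ≠ 0 := by positivity
    simp only [Function.comp_apply]
    field_simp
    ring
  refine tendsto_of_tendsto_of_tendsto_of_le_of_le' hlim tendsto_const_nhds ?_ ?_
  · filter_upwards [eventually_gt_atTop 0] with x hx using le_f hx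
  · filter_upwards [eventually_gt_atTop 0] with x hx using (f_lt_one hx).le

/-- For every `x > 0` one has `0 < f x < 1`; moreover `f x` tends to `0` as `x` tends
to `0` from the right, and `f x` tends to `1` as `x` tends to infinity. -/
theorem f_bounds_and_limits :
    (∀ x : ℝ, 0 < x → 0 < f x ∧ f x < 1) ∧
    Tendsto f (𝓝[>] (0 : ℝ)) (𝓝 0) ∧
    Tendsto f atTop (𝓝 1) :=
  ⟨fun _ hx => ⟨f_pos hx, f_lt_one hx⟩, tendsto_f_zero, tendsto_f_atTop⟩
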